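/- arXiv:2310.03556 — 4 statements merged into one kernel-verified Lean document; each statement's English description precedes it below -/
import Mathlib

section
/- Let d ≥ 1 and let x_1, …, x_N (N ≥ 1) be pairwise distinct points in ℝ^d. Fix an index j' ∈ {1, …, N} and fix bandwidths σ_j > 0 for all j ≠ j'. Then the A-KDE total log-likelihood L(σ) = ∑_{i=1}^N log( (1/N) ∑_{j=1}^N K_{σ_j}(x_i, x_j) ), viewed as a function of σ_{j'} alone, tends to +∞ as σ_{j'} → 0 from the right (within (0, ∞)). -/
/-- The isotropic Gaussian kernel on `ℝ^d` with center `μ` and bandwidth `σ`: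
`K_σ(x, μ) = (2πσ²)^{-d/2} · exp(−‖x − μ‖² / (2σ²))`. -/
noncomputable def gaussKernel (d : ℕ) (σ : ℝ) (x μ : EuclideanSpace ℝ (Fin d)) : ℝ :=
  (2 * Real.pi * σ ^ 2) ^ (-(d : ℝ) / 2) * Real.exp (-‖x - μ‖ ^ 2 / (2 * σ ^ 2))

theorem gaussKernel_nonneg_aux (d : ℕ) (s : ℝ) (x y : EuclideanSpace ℝ (Fin d)) :
    0 ≤ gaussKernel d s x y := by
  unfold gaussKernel
  have := Real.pi_pos
  positivity

theorem gaussKernel_pos_aux (d : ℕ) (s : ℝ) (hs : 0 < s) (x y : EuclideanSpace ℝ (Fin d)) :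
    0 < gaussKernel d s x y := by
  unfold gaussKernel
  have := Real.pi_pos
  positivity

theorem gaussKernel_self_tendsto_aux (d : ℕ) (hd : 1 ≤ d) (x : EuclideanSpace ℝ (Fin d)) :
    Filter.Tendsto (fun s : ℝ => gaussKernel d s x x)
      (nhdsWithin 0 (Set.Ioi 0)) Filter.atTop := by
  have h1 : Filter.Tendsto (fun s : ℝ => 2 * Real.pi * s ^ 2)
      (nhdsWithin 0 (Set.Ioi 0)) (nhdsWithin 0 (Set.Ioi 0)) := by
    refine tendsto_nhdsWithin_iff.2 ⟨?_, ?_⟩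
    · have : Continuous (fun s : ℝ => 2 * Real.pi * s ^ 2) := by fun_prop
      have h := this.tendsto 0
      simp only [ne_eq, OfNat.ofNat_ne_zero, not_false_eq_true, zero_pow, mul_zero] at h
      exact h.mono_left nhdsWithin_le_nhds
    · filter_upwards [self_mem_nhdsWithin] with s hs
      have hs' : 0 < s := hs
      have := Real.pi_pos
      show 0 < 2 * Real.pi * s ^ 2
      positivity
  have hd' : (1 : ℝ) ≤ d := by exact_mod_cast hd
  have h2 := (tendsto_rpow_neg_nhdsGT_zero (y := -(d : ℝ) / 2) (by linarith)).comp h1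
  simpa [gaussKernel, Function.comp_def] using h2

/-- If the data points are pairwise distinct and all bandwidths except the `j'`-th one are
fixed and positive, the A-KDE total log-likelihood tends to `+∞` as `σ_{j'} → 0⁺`. -/
theorem akde_mll_tendsto_atTop_of_bandwidth_collapse
    (d N : ℕ) (hd : 1 ≤ d) (hN : 1 ≤ N)
    (x : Fin N → EuclideanSpace ℝ (Fin d)) (hx : Function.Injective x)
    (j' : Fin N) (σ : Fin N → ℝ) (hσ : ∀ j, j ≠ j' → 0 < σ j) :
    Filter.Tendsto
      (fun s : ℝ => ∑ i, Real.log ((1 / (N : ℝ)) *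
        ∑ j, gaussKernel d (if j = j' then s else σ j) (x i) (x j)))
      (nhdsWithin 0 (Set.Ioi 0)) Filter.atTop := by
  have hN' : (0 : ℝ) < 1 / (N : ℝ) := by
    have : (0 : ℝ) < N := by exact_mod_cast hN
    positivity
  have key : Filter.Tendsto
      (fun s : ℝ => Real.log ((1 / (N : ℝ)) * gaussKernel d s (x j') (x j')) +
        ∑ i ∈ Finset.univ.erase j',
          Real.log ((1 / (N : ℝ)) * gaussKernel d (σ i) (x i) (x i)))
      (nhdsWithin 0 (Set.Ioi 0)) Filter.atTop :=
    Filter.tendsto_atTop_add_const_right _ _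
      (Real.tendsto_log_atTop.comp
        ((gaussKernel_self_tendsto_aux d hd (x j')).const_mul_atTop hN'))
  refine Filter.tendsto_atTop_mono' _ ?_ key
  filter_upwards [self_mem_nhdsWithin] with s hs
  have hs' : 0 < s := hs
  have step : ∀ i, 0 < (if i = j' then s else σ i) →
      Real.log ((1 / (N : ℝ)) * gaussKernel d (if i = j' then s else σ i) (x i) (x i)) ≤
      Real.log ((1 / (N : ℝ)) *
        ∑ j, gaussKernel d (if j = j' then s else σ j) (x i) (x j)) := by
    intro i hi
    apply Real.log_le_log (mul_pos hN' (gaussKernel_pos_aux d _ hi _ _))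
    apply mul_le_mul_of_nonneg_left _ hN'.le
    exact Finset.single_le_sum
      (f := fun j => gaussKernel d (if j = j' then s else σ j) (x i) (x j))
      (fun j _ => gaussKernel_nonneg_aux d _ _ _) (Finset.mem_univ i)
  rw [← Finset.add_sum_erase Finset.univ _ (Finset.mem_univ j')]
  apply add_le_add
  · have := step j' (by simpa using hs')
    rwa [if_pos rfl] at this
  · apply Finset.sum_le_sum
    intro i hi
    have hne := Finset.ne_of_mem_erase hi
    have := step i (by rw [if_neg hne]; exact hσ i hne)
    rwa [if_neg hne] at this
end

section
/- Let d ≥ 1, let N ≥ 2, and let x_1, …, x_N be pairwise distinct points in ℝ^d with m := min_{i ≠ j} ‖x_i − x_j‖ > 0. Then for every bandwidth vector σ ∈ (0, ∞)^N, the leave-one-out total log-likelihood satisfies ∑_{i=1}^N log( ∑_{j ≠ i} K_{σ_j}(x_i, x_j) ) ≤ N · log( (N − 1) · (2π)^{-d/2} · d^{d/2} · e^{-d/2} · m^{-d} ). In particular the LOO-MLL objective for A-KDE is bounded above on (0, ∞)^N. -/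
/-- Pointwise bound on the kernel, maximized over the bandwidth. -/
theorem gaussKernel_le_aux (d : ℕ) (hd : 1 ≤ d) (s m : ℝ) (hs : 0 < s) (hm : 0 < m)
    (x y : EuclideanSpace ℝ (Fin d)) (h : m ≤ ‖x - y‖) :
    gaussKernel d s x y ≤ (2 * Real.pi) ^ (-(d : ℝ) / 2) *
        (d : ℝ) ^ ((d : ℝ) / 2) * Real.exp (-(d : ℝ) / 2) * m ^ (-(d : ℝ)) := by
  have hd0 : (0 : ℝ) < d := by exact_mod_cast hd
  have hpi : 0 < 2 * Real.pi := by positivity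
  have hs2 : 0 < s ^ 2 := by positivity
  unfold gaussKernel
  rw [Real.rpow_def_of_pos (by positivity), Real.rpow_def_of_pos hpi, Real.rpow_def_of_pos hd0,
    Real.rpow_def_of_pos hm, ← Real.exp_add, ← Real.exp_add, ← Real.exp_add, ← Real.exp_add]
  apply Real.exp_le_exp.mpr
  rw [Real.log_mul hpi.ne' hs2.ne', Real.log_pow]
  have ht : 0 < m ^ 2 / (d * s ^ 2) := by positivity
  have h1 := Real.log_le_sub_one_of_pos ht
  rw [Real.log_div (by positivity) (by positivity), Real.log_mul hd0.ne' hs2.ne', Real.log_pow,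
    Real.log_pow] at h1
  have h2 := mul_le_mul_of_nonneg_left h1 (by positivity : (0 : ℝ) ≤ (d : ℝ) / 2)
  have h3 : (d : ℝ) / 2 * (m ^ 2 / (d * s ^ 2) - 1) = m ^ 2 / (2 * s ^ 2) - d / 2 := by
    field_simp
  have h4 : m ^ 2 / (2 * s ^ 2) ≤ ‖x - y‖ ^ 2 / (2 * s ^ 2) := by gcongr
  rw [h3] at h2
  rw [neg_div (2 * s ^ 2)]
  push_cast at h2 ⊢
  linarith

/-- For pairwise distinct data points with minimum pairwise distance `m > 0`, the
leave-one-out total log-likelihood for A-KDE is bounded above by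
`N · log ((N−1) · (2π)^{-d/2} · d^{d/2} · e^{-d/2} · m^{-d})` for every positive
bandwidth vector. -/
theorem akde_loo_mll_bounded_above
    (d N : ℕ) (hd : 1 ≤ d) (hN : 2 ≤ N)
    (x : Fin N → EuclideanSpace ℝ (Fin d)) (hx : Function.Injective x)
    (m : ℝ) (hm : IsLeast {r : ℝ | ∃ i j : Fin N, i ≠ j ∧ r = ‖x i - x j‖} m) (hm0 : 0 < m)
    (σ : Fin N → ℝ) (hσ : ∀ j, 0 < σ j) :
    ∑ i, Real.log (∑ j ∈ Finset.univ.erase i, gaussKernel d (σ j) (x i) (x j)) ≤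
      (N : ℝ) * Real.log (((N : ℝ) - 1) * (2 * Real.pi) ^ (-(d : ℝ) / 2) *
        (d : ℝ) ^ ((d : ℝ) / 2) * Real.exp (-(d : ℝ) / 2) * m ^ (-(d : ℝ))) := by
  have key : ∀ i : Fin N,
      Real.log (∑ j ∈ Finset.univ.erase i, gaussKernel d (σ j) (x i) (x j)) ≤
      Real.log (((N : ℝ) - 1) * (2 * Real.pi) ^ (-(d : ℝ) / 2) *
        (d : ℝ) ^ ((d : ℝ) / 2) * Real.exp (-(d : ℝ) / 2) * m ^ (-(d : ℝ))) := by
    intro i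
    have hcard : (Finset.univ.erase i).card = N - 1 := by
      rw [Finset.card_erase_of_mem (Finset.mem_univ i), Finset.card_univ, Fintype.card_fin]
    apply Real.log_le_log
    · apply Finset.sum_pos
      · intro j _
        have := hσ j
        unfold gaussKernel
        positivity
      · rw [← Finset.card_pos, hcard]
        omega
    · have hb := Finset.sum_le_card_nsmul (Finset.univ.erase i)
        (fun j => gaussKernel d (σ j) (x i) (x j)) _ (fun j hj =>
          gaussKernel_le_aux d hd (σ j) m (hσ j) hm0 (x i) (x j)
            (hm.2 ⟨i, j, (Finset.ne_of_mem_erase hj).symm, rfl⟩))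
      refine hb.trans (le_of_eq ?_)
      rw [hcard, nsmul_eq_mul, Nat.cast_sub (by omega)]
      push_cast
      ring
  refine (Finset.sum_le_sum (fun i _ => key i)).trans (le_of_eq ?_)
  rw [Finset.sum_const, Finset.card_univ, Fintype.card_fin, nsmul_eq_mul]
end

section
/- Let d ≥ 1, let N ≥ 2, and let x_1, …, x_N be pairwise distinct points in ℝ^d. Let σ ∈ (0, ∞)^N and fix an index j. Define the responsibilities w_{ij} = K_{σ_j}(x_i, x_j) / ∑_{k ≠ i} K_{σ_k}(x_i, x_k) for i ≠ j, and the gradient g_j = ∑_{i ≠ j} ( ‖x_i − x_j‖² / σ_j³ − d / σ_j ) · w_{ij}. If g_j ≤ 0, then σ_j² ≥ (1/d) · min_{i ≠ j} ‖x_i − x_j‖². In particular, at any point of (0, ∞)^N where the first-order optimality condition g_j ≤ 0 holds, the bandwidth σ_j is bounded away from 0 by a positive constant depending only on d and the minimal distance from x_j to the other data points. -/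
/-- If the first-order optimality condition `g_j ≤ 0` holds for the LOO-MLL objective for
A-KDE, where `g_j = ∑_{i ≠ j} (‖x_i − x_j‖²/σ_j³ − d/σ_j) · w_{ij}` with responsibilities
`w_{ij} = K_{σ_j}(x_i, x_j) / ∑_{k ≠ i} K_{σ_k}(x_i, x_k)`, then
`σ_j² ≥ (1/d) · min_{i ≠ j} ‖x_i − x_j‖²`. -/
theorem akde_loo_bandwidth_lower_bound_of_grad_nonpos
    (d N : ℕ) (hd : 1 ≤ d) (hN : 2 ≤ N)
    (x : Fin N → EuclideanSpace ℝ (Fin d)) (hx : Function.Injective x)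
    (σ : Fin N → ℝ) (hσ : ∀ k, 0 < σ k) (j : Fin N)
    (m2 : ℝ) (hm2 : IsLeast {r : ℝ | ∃ i : Fin N, i ≠ j ∧ r = ‖x i - x j‖ ^ 2} m2)
    (hg : ∑ i ∈ Finset.univ.erase j,
        (‖x i - x j‖ ^ 2 / (σ j) ^ 3 - (d : ℝ) / σ j) *
          (gaussKernel d (σ j) (x i) (x j) /
            ∑ k ∈ Finset.univ.erase i, gaussKernel d (σ k) (x i) (x k)) ≤ 0) :
    (1 / (d : ℝ)) * m2 ≤ (σ j) ^ 2 := by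
  have hpos : ∀ (s : ℝ) (a b : EuclideanSpace ℝ (Fin d)), 0 < s → 0 < gaussKernel d s a b := by
    intro s a b hs
    unfold gaussKernel
    have := Real.pi_pos
    positivity
  have hd0 : (0 : ℝ) < d := by exact_mod_cast hd
  have hs := hσ j
  by_contra hcon
  push Not at hcon
  have hlt : (d : ℝ) * σ j ^ 2 < m2 := by
    rw [one_div, inv_mul_eq_div, lt_div_iff₀ hd0] at hcon
    linarith
  refine absurd hg (not_le.mpr (Finset.sum_pos ?_ ?_))
  · intro i hi
    have hij : i ≠ j := Finset.ne_of_mem_erase hi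
    have hle : m2 ≤ ‖x i - x j‖ ^ 2 := hm2.2 ⟨i, hij, rfl⟩
    refine mul_pos ?_ (div_pos (hpos _ _ _ hs) (Finset.sum_pos (fun k _ => hpos _ _ _ (hσ k))
      ⟨j, Finset.mem_erase.mpr ⟨hij.symm, Finset.mem_univ _⟩⟩))
    have h : ‖x i - x j‖ ^ 2 / (σ j) ^ 3 - (d : ℝ) / σ j
        = (‖x i - x j‖ ^ 2 - d * σ j ^ 2) / σ j ^ 3 := by
      field_simp
    rw [h]
    exact div_pos (by linarith) (by positivity)
  · obtain ⟨i, hij, _⟩ := hm2.1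
    exact ⟨i, Finset.mem_erase.mpr ⟨hij, Finset.mem_univ _⟩⟩
end

section
/- Let d ≥ 1, let N ≥ 2, let x_1, …, x_N be pairwise distinct points in ℝ^d, and let π_1, …, π_N be weights with π_j > 0 for all j and ∑_{j=1}^N π_j = 1. Let σ ∈ (0, ∞)^N and fix an index j. Define the weighted responsibilities w_{ij} = π_j · K_{σ_j}(x_i, x_j) / ∑_{k ≠ i} π_k · K_{σ_k}(x_i, x_k) for i ≠ j, and the gradient g_j = ∑_{i ≠ j} ( ‖x_i − x_j‖² / σ_j³ − d / σ_j ) · w_{ij}. If g_j ≤ 0, then σ_j² ≥ (1/d) · min_{i ≠ j} ‖x_i − x_j‖². In particular, data-copying cannot occur at any optimal solution of the LOO-MLL objective for π-KDE when the data points are distinct. -/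
/-- If the first-order optimality condition `g_j ≤ 0` holds for the LOO-MLL objective for
π-KDE, where `g_j = ∑_{i ≠ j} (‖x_i − x_j‖²/σ_j³ − d/σ_j) · w_{ij}` with weighted
responsibilities `w_{ij} = π_j K_{σ_j}(x_i, x_j) / ∑_{k ≠ i} π_k K_{σ_k}(x_i, x_k)`, then
`σ_j² ≥ (1/d) · min_{i ≠ j} ‖x_i − x_j‖²`; in particular data-copying cannot occur at any
optimal solution of the LOO-MLL objective for π-KDE. -/
theorem pikde_loo_bandwidth_lower_bound_of_grad_nonpos
    (d N : ℕ) (hd : 1 ≤ d) (hN : 2 ≤ N)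
    (x : Fin N → EuclideanSpace ℝ (Fin d)) (hx : Function.Injective x)
    (w : Fin N → ℝ) (hw : ∀ j, 0 < w j) (hwsum : ∑ j, w j = 1)
    (σ : Fin N → ℝ) (hσ : ∀ k, 0 < σ k) (j : Fin N)
    (m2 : ℝ) (hm2 : IsLeast {r : ℝ | ∃ i : Fin N, i ≠ j ∧ r = ‖x i - x j‖ ^ 2} m2)
    (hg : ∑ i ∈ Finset.univ.erase j,
        (‖x i - x j‖ ^ 2 / (σ j) ^ 3 - (d : ℝ) / σ j) *
          (w j * gaussKernel d (σ j) (x i) (x j) /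
            ∑ k ∈ Finset.univ.erase i, w k * gaussKernel d (σ k) (x i) (x k)) ≤ 0) :
    (1 / (d : ℝ)) * m2 ≤ (σ j) ^ 2 := by
  by_contra hcon
  rw [not_le] at hcon
  have hdpos : (0 : ℝ) < d := by exact_mod_cast hd
  have hK : ∀ (s : ℝ), 0 < s → ∀ a b : EuclideanSpace ℝ (Fin d), 0 < gaussKernel d s a b := by
    intro s hs a b
    unfold gaussKernel
    have h := Real.pi_pos
    positivity
  have hlt : (d : ℝ) * (σ j) ^ 2 < m2 := by
    rw [one_div, inv_mul_eq_div, lt_div_iff₀ hdpos] at hcon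
    linarith
  obtain ⟨⟨i₀, hi₀, -⟩, hmin⟩ := hm2
  refine absurd hg (not_le.mpr (Finset.sum_pos ?_ ⟨i₀, by simp [hi₀]⟩))
  intro i hi
  have hij : i ≠ j := Finset.ne_of_mem_erase hi
  have hle : m2 ≤ ‖x i - x j‖ ^ 2 := hmin ⟨i, hij, rfl⟩
  have hs := hσ j
  apply mul_pos
  · have he : ‖x i - x j‖ ^ 2 / (σ j) ^ 3 - (d : ℝ) / σ j
        = (‖x i - x j‖ ^ 2 - d * (σ j) ^ 2) / (σ j) ^ 3 := by
      field_simp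
    rw [he]
    exact div_pos (by linarith) (by positivity)
  · apply div_pos (mul_pos (hw j) (hK _ hs _ _))
    exact Finset.sum_pos (fun k _ => mul_pos (hw k) (hK _ (hσ k) _ _))
      ⟨j, by simp [hij.symm]⟩
end
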